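/- Let (X, ω_X) and (Y, ω_Y) be networks, let φ : X → Y and ψ : Y → X be any maps, and let M = |X|. Then for every nonempty subset σ ⊆ X, the walk-length filtration value satisfies f_X(σ ∪ ψ(φ(σ))) ≤ f_X(σ) + M · codis¹(φ, ψ) + M · codis¹(ψ, φ). -/

import Mathlib

/-!
Write `x' = ψ (φ x)`. Taking `y = φ x` in the codistortions and using `ωY y y = 0`, the cost
`ωX x x' + ωX x' x` of the detour `x → x' → x` is a sum of one term of `codis1 ωX ωY φ ψ` and one
term of `codis1 ωY ωX ψ φ`, and different `x` use different terms. Given a walk through `σ`, insert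
this detour once for each `x ∈ σ` (`exists_walk_with_detours`): the result visits
`σ ∪ ψ (φ σ)` and its weight has grown by at most the sum of the two codistortions
(`sum_out_le_codis1`, `sum_back_le_codis1`). This is stronger than the claim because
`1 ≤ |X|`; taking the infimum over walks concludes.
-/

variable {X Y : Type*}

/-- The weight of a walk in a network (complete weighted digraph), given as a list of
vertices: the sum of the weights of consecutive pairs. -/
def walkWeight (ω : X → X → ℝ) (l : List X) : ℝ :=
  ((l.zip l.tail).map fun p => ω p.1 p.2).sum

/-- The walk-length filtration value of a set of vertices of a network: the infimum of the
weights of walks containing all vertices of `σ`. -/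
noncomputable def wlf (ω : X → X → ℝ) (σ : Set X) : ℝ :=
  sInf {c | ∃ l : List X, l ≠ [] ∧ (∀ v ∈ σ, v ∈ l) ∧ walkWeight ω l = c}

/-- The ℓ1-codistortion of a pair of maps `φ : X → Y`, `ψ : Y → X`:
`codis¹(φ, ψ) = Σ_{(x,y) ∈ X × Y} |ω_X(x, ψ(y)) − ω_Y(φ(x), y)|`. -/
noncomputable def codis1 [Fintype X] [Fintype Y] (ωX : X → X → ℝ) (ωY : Y → Y → ℝ)
    (φ : X → Y) (ψ : Y → X) : ℝ :=
  ∑ x : X, ∑ y : Y, |ωX x (ψ y) - ωY (φ x) y|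

theorem walkWeight_cons_cons (ω : X → X → ℝ) (a b : X) (l : List X) :
    walkWeight ω (a :: b :: l) = ω a b + walkWeight ω (b :: l) := by
  simp [walkWeight]

theorem walkWeight_nonneg (ω : X → X → ℝ) (h : ∀ a b, 0 ≤ ω a b) (l : List X) :
    0 ≤ walkWeight ω l := by
  apply List.sum_nonneg
  simp only [List.mem_map]
  rintro _ ⟨p, -, rfl⟩
  exact h _ _

theorem walkWeight_detour (ω : X → X → ℝ) (x z : X) (s t : List X) :
    walkWeight ω (s ++ x :: z :: x :: t) = walkWeight ω (s ++ x :: t) + (ω x z + ω z x) := by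
  induction s with
  | nil => simp only [List.nil_append, walkWeight_cons_cons]; ring
  | cons a s ih =>
    cases s with
    | nil =>
      simp only [List.cons_append, List.nil_append, walkWeight_cons_cons]; ring
    | cons b s =>
      simp only [List.cons_append, walkWeight_cons_cons] at ih ⊢
      rw [ih]; ring

/-- Detours `x → g x → x` can be inserted into a walk once for each `x` in a finite set `S` of
its vertices, adding exactly the sum of the lengths of the detours to the weight. -/
theorem exists_walk_with_detours (ω : X → X → ℝ) (g : X → X) (l : List X) (S : Finset X)
    (hS : ∀ x ∈ S, x ∈ l) :
    ∃ l' : List X, (∀ x ∈ l, x ∈ l') ∧ (∀ x ∈ S, g x ∈ l') ∧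
      walkWeight ω l' = walkWeight ω l + ∑ x ∈ S, (ω x (g x) + ω (g x) x) := by
  classical
  induction S using Finset.induction_on with
  | empty => exact ⟨l, by simp⟩
  | insert a S ha ih =>
    obtain ⟨l', h1, h2, h3⟩ := ih fun x hx => hS x (Finset.mem_insert_of_mem hx)
    obtain ⟨s, t, rfl⟩ := List.append_of_mem (h1 a (hS a (Finset.mem_insert_self a S)))
    have hmem : ∀ x ∈ s ++ a :: t, x ∈ s ++ a :: g a :: a :: t := by
      intro x hx
      simp only [List.mem_append, List.mem_cons] at hx ⊢
      tauto
    refine ⟨s ++ a :: g a :: a :: t, fun x hx => hmem x (h1 x hx), ?_, ?_⟩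
    · intro x hx
      rcases Finset.mem_insert.1 hx with rfl | hx
      · simp
      · exact hmem _ (h2 x hx)
    · rw [walkWeight_detour, h3, Finset.sum_insert ha]; ring

theorem codis1_nonneg [Fintype X] [Fintype Y] (ωX : X → X → ℝ) (ωY : Y → Y → ℝ)
    (φ : X → Y) (ψ : Y → X) : 0 ≤ codis1 ωX ωY φ ψ :=
  Finset.sum_nonneg fun _ _ => Finset.sum_nonneg fun _ _ => abs_nonneg _

/-- The outgoing halves of the detours are the terms `(x, φ x)` of the codistortion. -/
theorem sum_out_le_codis1 [Fintype X] [Fintype Y] (ωX : X → X → ℝ) (ωY : Y → Y → ℝ)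
    (hY : ∀ y, ωY y y = 0) (φ : X → Y) (ψ : Y → X) :
    ∑ x, ωX x (ψ (φ x)) ≤ codis1 ωX ωY φ ψ := by
  refine Finset.sum_le_sum fun x _ => ?_
  have h := Finset.single_le_sum (f := fun y => |ωX x (ψ y) - ωY (φ x) y|)
    (fun y _ => abs_nonneg _) (Finset.mem_univ (φ x))
  simp only [hY, sub_zero] at h
  exact (le_abs_self _).trans h

/-- The returning halves of the detours are the terms `(φ x, x)` of the codistortion. -/
theorem sum_back_le_codis1 [Fintype X] [Fintype Y] (ωX : X → X → ℝ) (ωY : Y → Y → ℝ)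
    (hY : ∀ y, ωY y y = 0) (φ : X → Y) (ψ : Y → X) :
    ∑ x, ωX (ψ (φ x)) x ≤ codis1 ωY ωX ψ φ := by
  unfold codis1
  rw [Finset.sum_comm]
  refine Finset.sum_le_sum fun x _ => ?_
  have h := Finset.single_le_sum (f := fun y => |ωY y (φ x) - ωX (ψ y) x|)
    (fun y _ => abs_nonneg _) (Finset.mem_univ (φ x))
  simp only [hY, zero_sub, abs_neg] at h
  exact (le_abs_self _).trans h

/-- For networks `(X, ω_X)`, `(Y, ω_Y)`, any maps `φ : X → Y` and `ψ : Y → X`, and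
`M = |X|`: for every nonempty `σ ⊆ X`,
`f_X(σ ∪ ψ(φ(σ))) ≤ f_X(σ) + M · codis¹(φ, ψ) + M · codis¹(ψ, φ)`. -/
theorem stmt13 [Fintype X] [Fintype Y] [Nonempty X] [Nonempty Y]
    (ωX : X → X → ℝ) (ωY : Y → Y → ℝ)
    (hX0 : ∀ a b, 0 ≤ ωX a b) (hXz : ∀ a b, ωX a b = 0 ↔ a = b)
    (hY0 : ∀ a b, 0 ≤ ωY a b) (hYz : ∀ a b, ωY a b = 0 ↔ a = b)
    (φ : X → Y) (ψ : Y → X) (σ : Set X) (hσ : σ.Nonempty) :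
    wlf ωX (σ ∪ ψ '' (φ '' σ))
      ≤ wlf ωX σ + (Fintype.card X : ℝ) * codis1 ωX ωY φ ψ
          + (Fintype.card X : ℝ) * codis1 ωY ωX ψ φ := by
  classical
  have hY : ∀ y, ωY y y = 0 := fun y => (hYz y y).2 rfl
  have hM : (1 : ℝ) ≤ Fintype.card X := by exact_mod_cast Fintype.card_pos (α := X)
  have hc1 := le_mul_of_one_le_left (codis1_nonneg ωX ωY φ ψ) hM
  have hc2 := le_mul_of_one_le_left (codis1_nonneg ωY ωX ψ φ) hM
  have key : wlf ωX (σ ∪ ψ '' (φ '' σ)) - codis1 ωX ωY φ ψ - codis1 ωY ωX ψ φ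
      ≤ wlf ωX σ := by
    refine le_csInf ⟨_, Finset.univ.toList, by simp [Finset.univ_nonempty.ne_empty], by simp, rfl⟩ ?_
    rintro _ ⟨l, -, hl, rfl⟩
    obtain ⟨l', h1, h2, h3⟩ :=
      exists_walk_with_detours ωX (fun x => ψ (φ x)) l σ.toFinset (by simpa using hl)
    obtain ⟨a, ha⟩ := hσ
    have hle : wlf ωX (σ ∪ ψ '' (φ '' σ)) ≤ walkWeight ωX l' := by
      refine csInf_le ⟨0, ?_⟩ ⟨l', List.ne_nil_of_mem (h1 a (hl a ha)), ?_, rfl⟩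
      · rintro _ ⟨m, -, -, rfl⟩
        exact walkWeight_nonneg ωX hX0 m
      · rintro v (hv | ⟨_, ⟨x, hx, rfl⟩, rfl⟩)
        · exact h1 v (hl v hv)
        · exact h2 x (by simpa using hx)
    have hsum : ∑ x ∈ σ.toFinset, (ωX x (ψ (φ x)) + ωX (ψ (φ x)) x)
        ≤ ∑ x, (ωX x (ψ (φ x)) + ωX (ψ (φ x)) x) :=
      Finset.sum_le_sum_of_subset_of_nonneg (Finset.subset_univ _)
        fun x _ _ => add_nonneg (hX0 _ _) (hX0 _ _)
    rw [Finset.sum_add_distrib (s := Finset.univ)] at hsum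
    have ho := sum_out_le_codis1 ωX ωY hY φ ψ
    have hb := sum_back_le_codis1 ωX ωY hY φ ψ
    linarith
  linarith
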